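/- Assume λ > 0, δ > 0 and P > 0, and for each ρ > 0 let (β*(ρ), τ*(ρ)) be the unique saddle point of max_{β ≥ 0} min_{τ > 0} D(β,τ) with parameter ρ. Let s* = (√((δ − λ − 1)² + 4δλ) − δ + λ + 1)/(2δλ). Then, as ρ → 0⁺, the ratio τ*(ρ)/(√ρ/√(δ − 1/(1 + λ·s*)²)) converges to 1 and the ratio β*(ρ)/(2√ρ/(s*·√(δ − 1/(1 + λ·s*)²))) converges to 1. -/

import Mathlib

open MeasureTheory ProbabilityTheory Filter

noncomputable section

/-- Standard Gaussian `N(0,1)` measure on `ℝ`. -/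
def stdGaussian : Measure ℝ := ProbabilityTheory.gaussianReal 0 1

/-- `Yfun P lam β τ = (β/α)·(E[(H − √P·α)²·1{H ≥ √P·α}] − 1/2)` with `α = 1/τ + 2λ/β`. -/
def Yfun (P lam β τ : ℝ) : ℝ :=
  (β / (1 / τ + 2 * lam / β)) *
    ((∫ h in Set.Ici (Real.sqrt P * (1 / τ + 2 * lam / β)),
        (h - Real.sqrt P * (1 / τ + 2 * lam / β)) ^ 2 ∂stdGaussian) - 1 / 2)

/-- `D(β,τ) = τβδ/2 + ρβ/(2τ) − β²/4 + Y(β,τ)`, with the convention `D(0,τ) = 0`. -/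
def Dfun (δ ρ P lam β τ : ℝ) : ℝ :=
  if β = 0 then 0
  else τ * β * δ / 2 + ρ * β / (2 * τ) - β ^ 2 / 4 + Yfun P lam β τ

/-- `(βs, τs)` is a saddle point of `max_{β ≥ 0} min_{τ > 0} D(β, τ)`:
`D(β,τs) ≤ D(βs,τs) ≤ D(βs,τ)` for all `β ≥ 0` and `τ > 0`. -/
def IsSaddle (δ ρ P lam βs τs : ℝ) : Prop :=
  0 ≤ βs ∧ 0 < τs ∧
  (∀ β, 0 ≤ β → Dfun δ ρ P lam β τs ≤ Dfun δ ρ P lam βs τs) ∧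
  (∀ τ, 0 < τ → Dfun δ ρ P lam βs τs ≤ Dfun δ ρ P lam βs τ)

end

/-- truncated second moment -/
noncomputable def auxG (x : ℝ) : ℝ := ∫ h, (max (h - x) 0) ^ 2 ∂_root_.stdGaussian

/-- truncated first moment -/
noncomputable def auxE (x : ℝ) : ℝ := ∫ h, max (h - x) 0 ∂_root_.stdGaussian

instance instProbStd : IsProbabilityMeasure _root_.stdGaussian := by
  unfold _root_.stdGaussian; infer_instance

lemma aux_pow_int (n : ℕ) : Integrable (fun h : ℝ => |h| ^ n) _root_.stdGaussian := by
  have h : MemLp id (n : ENNReal) _root_.stdGaussian := by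
    have := memLp_id_gaussianReal (μ := 0) (v := 1) (n : NNReal)
    simpa [_root_.stdGaussian] using this
  simpa using h.integrable_norm_pow'

lemma aux_sq_int : Integrable (fun h : ℝ => h ^ 2) _root_.stdGaussian := by
  simpa using aux_pow_int 2

lemma aux_four_int : Integrable (fun h : ℝ => h ^ 4) _root_.stdGaussian := by
  have := aux_pow_int 4
  refine this.congr (Eventually.of_forall fun h => ?_)
  have : |h| ^ 4 = (|h| ^ 2) ^ 2 := by ring
  simp only [this, sq_abs]; ring

lemma aux_id_int : Integrable (fun h : ℝ => h) _root_.stdGaussian := by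
  have h := aux_pow_int 1
  refine h.mono' (by fun_prop) (Eventually.of_forall fun h => by simp)

lemma auxE_int (x : ℝ) : Integrable (fun h : ℝ => max (h - x) 0) _root_.stdGaussian :=
  (aux_id_int.sub (integrable_const x)).pos_part

lemma auxG_int (x : ℝ) : Integrable (fun h : ℝ => (max (h - x) 0) ^ 2) _root_.stdGaussian := by
  have h2 : Integrable (fun h : ℝ => 2 * h ^ 2 + 2 * x ^ 2) _root_.stdGaussian :=
    (aux_sq_int.const_mul 2).add (integrable_const _)
  refine h2.mono' (by fun_prop) (Eventually.of_forall fun h => ?_)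
  rw [Real.norm_eq_abs, abs_of_nonneg (by positivity)]
  rcases max_cases (h - x) 0 with ⟨e, _⟩ | ⟨e, _⟩ <;> rw [e] <;> nlinarith [sq_nonneg (h + x)]

lemma auxG_nonneg (x : ℝ) : 0 ≤ auxG x := integral_nonneg fun _ => by positivity

lemma auxE_nonneg (x : ℝ) : 0 ≤ auxE x := integral_nonneg fun _ => by positivity

lemma aux_set (x : ℝ) :
    ∫ h in Set.Ici x, (h - x) ^ 2 ∂_root_.stdGaussian = auxG x := by
  unfold auxG
  rw [← integral_indicator measurableSet_Ici]
  congr 1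
  ext h
  by_cases hx : x ≤ h
  · rw [Set.indicator_of_mem (by exact hx), max_eq_left (by linarith)]
  · rw [Set.indicator_of_notMem (by exact hx), max_eq_right (by linarith)]; simp

lemma auxG_taylor (x y : ℝ) :
    |auxG y - auxG x - (y - x) * (-2 * auxE x)| ≤ (y - x) ^ 2 := by
  have e : auxG y - auxG x - (y - x) * (-2 * auxE x)
      = ∫ h, ((max (h - y) 0) ^ 2 - (max (h - x) 0) ^ 2
          - (y - x) * (-2 * max (h - x) 0)) ∂_root_.stdGaussian := by
    have h1 : Integrable (fun h => (max (h - y) 0) ^ 2 - (max (h - x) 0) ^ 2)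
        _root_.stdGaussian := (auxG_int y).sub (auxG_int x)
    rw [integral_sub h1 (((auxE_int x).const_mul _).const_mul _),
      integral_sub (auxG_int y) (auxG_int x), integral_const_mul, integral_const_mul]
    rfl
  rw [e, ← Real.norm_eq_abs]
  have := norm_integral_le_of_norm_le_const (μ := _root_.stdGaussian) (C := (y - x) ^ 2)
    (f := fun h => ((max (h - y) 0) ^ 2 - (max (h - x) 0) ^ 2
          - (y - x) * (-2 * max (h - x) 0))) (Eventually.of_forall fun h => by
      rw [Real.norm_eq_abs, abs_le]
      rcases max_cases (h - y) 0 with ⟨e, _⟩ | ⟨e, _⟩ <;>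
      rcases max_cases (h - x) 0 with ⟨e', _⟩ | ⟨e', _⟩ <;> rw [e, e'] <;> constructor <;>
      nlinarith)
  simpa using this

lemma auxG_deriv (x : ℝ) : HasDerivAt auxG (-2 * auxE x) x := by
  rw [hasDerivAt_iff_isLittleO]
  have h1 : (fun y => auxG y - auxG x - (y - x) • (-2 * auxE x)) =O[nhds x]
      fun y => (y - x) ^ 2 := by
    refine Asymptotics.IsBigO.of_bound 1 (Eventually.of_forall fun y => ?_)
    have := auxG_taylor x y
    simpa [abs_of_nonneg] using this
  refine h1.trans_isLittleO ?_
  have := (Asymptotics.isLittleO_pow_id (𝕜 := ℝ) (n := 2) (by norm_num)).comp_tendsto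
    (k := fun y => y - x) (l' := nhds x) (by
      have : Tendsto (fun y => y - x) (nhds x) (nhds (x - x)) := by
        apply Continuous.tendsto; fun_prop
      simpa using this)
  exact this

/-- `T x = G x + x E x` -/
lemma auxT_eq (x : ℝ) : auxG x + x * auxE x = ∫ h, h * max (h - x) 0 ∂_root_.stdGaussian := by
  unfold auxG auxE
  rw [← integral_const_mul, ← integral_add (auxG_int x) ((auxE_int x).const_mul x)]
  congr 1; ext h
  rcases max_cases (h - x) 0 with ⟨e, _⟩ | ⟨e, _⟩ <;> rw [e] <;> ring

lemma auxT_int (x : ℝ) : Integrable (fun h : ℝ => h * max (h - x) 0) _root_.stdGaussian := by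
  refine ((auxG_int x).add ((auxE_int x).const_mul x)).congr (Eventually.of_forall fun h => ?_)
  simp only [Pi.add_apply]
  rcases max_cases (h - x) 0 with ⟨e, _⟩ | ⟨e, _⟩ <;> rw [e] <;> ring

lemma aux_sq_one : ∫ h, h ^ 2 ∂_root_.stdGaussian = 1 := by
  have h := variance_fun_id_gaussianReal (μ := 0) (v := 1)
  have h0 := integral_id_gaussianReal (μ := 0) (v := 1)
  rw [variance_eq_integral (by fun_prop)] at h
  simpa [_root_.stdGaussian, h0] using h

lemma auxG_zero : auxG 0 = 1 / 2 := by
  have hs : auxG 0 = ∫ h, (max (-h) 0) ^ 2 ∂_root_.stdGaussian := by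
    have hm : _root_.stdGaussian.map (fun h => -h) = _root_.stdGaussian := by
      unfold _root_.stdGaussian
      rw [gaussianReal_map_neg]; simp
    unfold auxG
    conv_lhs => rw [← hm]
    rw [integral_map (by fun_prop) (by fun_prop)]
    simp
  have hi : Integrable (fun h : ℝ => (max (-h) 0) ^ 2) _root_.stdGaussian := by
    refine aux_sq_int.mono' (by fun_prop) (Eventually.of_forall fun h => ?_)
    rw [Real.norm_eq_abs, abs_of_nonneg (by positivity)]
    rcases max_cases (-h) 0 with ⟨e, _⟩ | ⟨e, _⟩ <;> rw [e] <;> nlinarith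
  have h2 : auxG 0 + auxG 0 = 1 := by
    nth_rewrite 2 [hs]
    rw [← aux_sq_one]
    unfold auxG
    rw [← integral_add (auxG_int 0) hi]
    congr 1; ext h
    rcases max_cases (-h) 0 with ⟨e, _⟩ | ⟨e, _⟩ <;>
    rcases max_cases (h - 0) 0 with ⟨e', _⟩ | ⟨e', _⟩ <;> rw [e, e'] <;> nlinarith
  linarith

lemma auxT_half (x : ℝ) (hx : 0 ≤ x) : auxG x + x * auxE x ≤ 1 / 2 := by
  rw [auxT_eq, ← auxG_zero]
  unfold auxG
  refine integral_mono (auxT_int x) (auxG_int 0) fun h => ?_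
  simp only
  rcases max_cases (h - x) 0 with ⟨e, _⟩ | ⟨e, _⟩ <;>
    rcases max_cases (h - 0) 0 with ⟨e', _⟩ | ⟨e', _⟩ <;> rw [e, e'] <;> nlinarith

lemma auxT_small (x : ℝ) (hx : 0 < x) :
    auxG x + x * auxE x ≤ (∫ h, h ^ 4 ∂_root_.stdGaussian) / x ^ 2 := by
  rw [auxT_eq, ← integral_div]
  refine integral_mono (auxT_int x) (aux_four_int.div_const _) fun h => ?_
  simp only
  rw [le_div_iff₀ (by positivity)]
  rcases max_cases (h - x) 0 with ⟨e, _⟩ | ⟨e, _⟩ <;> rw [e]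
  · have h1 : h * (h - x) ≤ h ^ 2 := by nlinarith
    have h2 : x ^ 2 ≤ h ^ 2 := by nlinarith
    have h3 : h * (h - x) * x ^ 2 ≤ h ^ 2 * h ^ 2 := by
      apply mul_le_mul h1 h2 (by positivity) (by positivity)
    nlinarith
  · simp; positivity

lemma Dfun_eq {δ ρ P lam β τ : ℝ} (hb : β ≠ 0) :
    Dfun δ ρ P lam β τ = τ * β * δ / 2 + ρ * β / (2 * τ) - β ^ 2 / 4 +
      (β / (1 / τ + 2 * lam / β)) *
        (auxG (Real.sqrt P * (1 / τ + 2 * lam / β)) - 1 / 2) := by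
  rw [Dfun, if_neg hb, Yfun, aux_set]

lemma saddle_beta_pos {δ ρ P lam β τ : ℝ} (hδ : 0 < δ) (hlam : 0 < lam) (hρ : 0 < ρ)
    (h : IsSaddle δ ρ P lam β τ) : 0 < β := by
  obtain ⟨hb, ht, hmax, -⟩ := h
  rcases hb.lt_or_eq with hb | hb
  · exact hb
  exfalso
  subst hb
  have hD0 : Dfun δ ρ P lam 0 τ = 0 := by simp [Dfun]
  rw [hD0] at hmax
  set c := 1 / 4 + 1 / (4 * lam) with hc
  have hcpos : 0 < c := by positivity
  set b := τ * δ / (4 * c) with hbdef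
  have hbpos : 0 < b := by positivity
  have h1 := hmax b hbpos.le
  rw [Dfun_eq hbpos.ne'] at h1
  have hα : 2 * lam / b ≤ 1 / τ + 2 * lam / b := by
    have : 0 < 1 / τ := by positivity
    linarith
  have hq : b / (1 / τ + 2 * lam / b) ≤ b ^ 2 / (2 * lam) := by
    calc b / (1 / τ + 2 * lam / b) ≤ b / (2 * lam / b) := by gcongr
      _ = b ^ 2 / (2 * lam) := by field_simp
  have hq0 : 0 < b / (1 / τ + 2 * lam / b) := by positivity
  have hG := auxG_nonneg (Real.sqrt P * (1 / τ + 2 * lam / b))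
  have hY : -(b ^ 2 / (2 * lam)) / 2 ≤ (b / (1 / τ + 2 * lam / b)) *
        (auxG (Real.sqrt P * (1 / τ + 2 * lam / b)) - 1 / 2) := by nlinarith
  have h3 : 0 < ρ * b / (2 * τ) := by positivity
  have h4 : b * c = τ * δ / 4 := by rw [hbdef]; field_simp
  have h5 : b ^ 2 / 4 + b ^ 2 / (2 * lam) / 2 = b * (b * c) := by rw [hc]; field_simp; ring
  rw [h4] at h5
  have : 0 < τ * b * δ := by positivity
  nlinarith

lemma foc_tau {δ ρ P lam β τ : ℝ} (hlam : 0 < lam) (hb : 0 < β)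
    (h : IsSaddle δ ρ P lam β τ) :
    ρ / τ ^ 2 = δ - (1 - 2 * auxG (Real.sqrt P * (1 / τ + 2 * lam / β)) -
      4 * (Real.sqrt P * (1 / τ + 2 * lam / β)) * auxE (Real.sqrt P * (1 / τ + 2 * lam / β)))
        / (1 + lam * (2 * τ / β)) ^ 2 := by
  obtain ⟨-, ht, -, hmin⟩ := h
  set a := Real.sqrt P
  have hα : HasDerivAt (fun t : ℝ => 1 / t + 2 * lam / β) (-1 / τ ^ 2) τ := by
    have := ((hasDerivAt_inv ht.ne').add_const (2 * lam / β))
    refine (this.congr_of_eventuallyEq (Eventually.of_forall fun t => ?_)).congr_deriv ?_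
    · simp
    · ring
  have hαpos : 0 < 1 / τ + 2 * lam / β := by positivity
  have hG := (auxG_deriv (a * (1 / τ + 2 * lam / β))).comp τ (hα.const_mul a)
  have hY := ((hasDerivAt_const τ β).fun_div hα hαpos.ne').fun_mul (hG.sub_const (1 / 2))
  have hA : HasDerivAt (fun t : ℝ => t * β * δ / 2 + ρ * β / (2 * t) - β ^ 2 / 4)
      (β * δ / 2 - ρ * β / (2 * τ ^ 2)) τ := by
    have h1 : HasDerivAt (fun t : ℝ => t * (β * δ / 2)) (1 * (β * δ / 2)) τ :=
      (hasDerivAt_id τ).mul_const _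
    have h2 := ((hasDerivAt_inv ht.ne').const_mul (ρ * β / 2))
    have h3 := (h1.fun_add h2).sub_const (β ^ 2 / 4)
    refine (h3.congr_of_eventuallyEq (Eventually.of_forall fun t => ?_)).congr_deriv ?_
    · simp only [div_eq_mul_inv, mul_inv]; ring
    · ring
  have hD := hA.fun_add hY
  have hloc : IsLocalMin (fun t => Dfun δ ρ P lam β t) τ := by
    filter_upwards [lt_mem_nhds ht] with t ht'
    exact hmin t ht'
  have hD' : HasDerivAt (fun t => Dfun δ ρ P lam β t) _ τ :=
    hD.congr_of_eventuallyEq (Eventually.of_forall fun t => by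
      simp only [Dfun_eq hb.ne']; rfl)
  have h0 := hloc.hasDerivAt_eq_zero hD'
  simp only [Function.comp] at h0
  generalize hg : auxG (a * (1 / τ + 2 * lam / β)) = g at h0 ⊢
  generalize hg : auxE (a * (1 / τ + 2 * lam / β)) = e at h0 ⊢
  have hs : 1 / τ + 2 * lam / β = (1 + lam * (2 * τ / β)) / τ := by field_simp
  rw [hs] at h0 ⊢
  have hu : 0 < 1 + lam * (2 * τ / β) := by positivity
  generalize 1 + lam * (2 * τ / β) = u at h0 hu ⊢
  field_simp at h0 ⊢
  apply mul_left_cancel₀ hb.ne'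
  linear_combination -h0

lemma foc_beta {δ ρ P lam β τ : ℝ} (hlam : 0 < lam) (hb : 0 < β)
    (h : IsSaddle δ ρ P lam β τ) :
    δ - 1 / (2 * τ / β) = (1 - 2 * auxG (Real.sqrt P * (1 / τ + 2 * lam / β)) -
      2 * (Real.sqrt P * (1 / τ + 2 * lam / β)) * auxE (Real.sqrt P * (1 / τ + 2 * lam / β)))
        / (1 + lam * (2 * τ / β)) := by
  have hT := foc_tau hlam hb h
  obtain ⟨-, ht, hmax, -⟩ := h
  set a := Real.sqrt P
  have hα : HasDerivAt (fun b : ℝ => 1 / τ + 2 * lam / b) (-(2 * lam) / β ^ 2) β := by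
    have := (((hasDerivAt_inv hb.ne').const_mul (2 * lam)).const_add (1 / τ))
    refine (this.congr_of_eventuallyEq (Eventually.of_forall fun t => ?_)).congr_deriv ?_
    · simp only [div_eq_mul_inv]
    · ring
  have hαpos : 0 < 1 / τ + 2 * lam / β := by positivity
  have hG := (auxG_deriv (a * (1 / τ + 2 * lam / β))).comp β (hα.const_mul a)
  have hY := ((hasDerivAt_id β).fun_div hα hαpos.ne').fun_mul (hG.sub_const (1 / 2))
  have hA : HasDerivAt (fun b : ℝ => τ * b * δ / 2 + ρ * b / (2 * τ) - b ^ 2 / 4)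
      (τ * δ / 2 + ρ / (2 * τ) - β / 2) β := by
    have h1 : HasDerivAt (fun b : ℝ => b * (τ * δ / 2 + ρ / (2 * τ)))
      (1 * (τ * δ / 2 + ρ / (2 * τ))) β := (hasDerivAt_id β).mul_const _
    have h2 := (hasDerivAt_pow 2 β).div_const 4
    have h3 := h1.fun_sub h2
    refine (h3.congr_of_eventuallyEq (Eventually.of_forall fun t => ?_)).congr_deriv ?_
    · simp only [div_eq_mul_inv]; ring
    · simp; ring
  have hD := hA.fun_add hY
  have hloc : IsLocalMax (fun b => Dfun δ ρ P lam b τ) β := by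
    filter_upwards [lt_mem_nhds hb] with t ht'
    exact hmax t ht'.le
  have hD' : HasDerivAt (fun b => Dfun δ ρ P lam b τ) _ β :=
    hD.congr_of_eventuallyEq (by
      filter_upwards [lt_mem_nhds hb] with t ht'
      simp only [Dfun_eq ht'.ne']; rfl)
  have h0 := hloc.hasDerivAt_eq_zero hD'
  simp only [Function.comp, id] at h0
  generalize hg : auxG (a * (1 / τ + 2 * lam / β)) = g at h0 hT ⊢
  generalize hg : auxE (a * (1 / τ + 2 * lam / β)) = e at h0 hT ⊢
  have hρ : ρ = τ ^ 2 * (ρ / τ ^ 2) := by field_simp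
  rw [hT] at hρ
  rw [hρ] at h0
  have hs : 1 / τ + 2 * lam / β = (1 + lam * (2 * τ / β)) / τ := by field_simp
  rw [hs] at h0 ⊢
  have hu : 0 < 1 + lam * (2 * τ / β) := by positivity
  have hl : lam = (1 + lam * (2 * τ / β) - 1) * β / (2 * τ) := by field_simp; ring
  generalize 1 + lam * (2 * τ / β) = u at h0 hu hl ⊢
  rw [hl] at h0
  field_simp at h0 ⊢
  apply mul_left_cancel₀ hu.ne'
  linear_combination h0

set_option maxHeartbeats 1000000 in
lemma saddle_core {δ ρ P lam β τ S : ℝ} (hδ : 0 < δ) (hP : 0 < P) (hlam : 0 < lam) (hρ : 0 < ρ)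
    (hS : 0 < S) (hSe : δ - 1 / S = 1 / (1 + lam * S))
    (h : IsSaddle δ ρ P lam β τ) :
    ∃ k, 0 < τ ∧ 0 < β ∧
      |k - 1| ≤ 4 * ((∫ h, h ^ 4 ∂_root_.stdGaussian) * S / P) * ρ ∧
      |2 * τ / β - S| ≤ 2 * ((∫ h, h ^ 4 ∂_root_.stdGaussian) * S / P) * S ^ 2 * ρ ∧
      ρ / τ ^ 2 = δ - k / (1 + lam * (2 * τ / β)) ^ 2 := by
  have hb := saddle_beta_pos hδ hlam hρ h
  have h1 := foc_tau hlam hb h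
  have h2 := foc_beta hlam hb h
  have ht : 0 < τ := h.2.1
  set x := Real.sqrt P * (1 / τ + 2 * lam / β) with hx
  have hxpos : 0 < x := by positivity
  have hTh := auxT_half x hxpos.le
  have hTs := auxT_small x hxpos
  have hG := auxG_nonneg x
  have hE : 0 ≤ x * auxE x := mul_nonneg hxpos.le (auxE_nonneg x)
  rw [show 4 * x * auxE x = 4 * (x * auxE x) by ring] at h1
  rw [show 2 * x * auxE x = 2 * (x * auxE x) by ring] at h2
  have hC : 0 ≤ ∫ h, h ^ 4 ∂_root_.stdGaussian := integral_nonneg fun h => by positivity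
  generalize (∫ h, h ^ 4 ∂_root_.stdGaussian) = C at *
  generalize auxG x = g at *
  generalize x * auxE x = e at *
  have hs : 0 < 2 * τ / β := by positivity
  have hxs : 1 / τ + 2 * lam / β = (1 + lam * (2 * τ / β)) / τ := by field_simp
  have hx2 : x ^ 2 = P * ((1 + lam * (2 * τ / β)) / τ) ^ 2 := by
    rw [hx, hxs, mul_pow, Real.sq_sqrt hP.le]
  generalize 2 * τ / β = s at *
  have hu : 1 < 1 + lam * s := by nlinarith [mul_pos hlam hs]
  have hU : 1 < 1 + lam * S := by nlinarith [mul_pos hlam hS]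
  -- difference identity
  have hdiff : (S - s) * (1 / (s * S) + lam / ((1 + lam * s) * (1 + lam * S))) =
      (2 * g + 2 * e) / (1 + lam * s) := by
    have e1 : (δ - 1 / S) - (δ - 1 / s) = 1 / (1 + lam * S) -
      (1 - 2 * g - 2 * e) / (1 + lam * s) := by rw [hSe, h2]
    have e2 : (S - s) * (1 / (s * S)) = (δ - 1 / S) - (δ - 1 / s) := by field_simp; ring
    have e3 : (S - s) * (lam / ((1 + lam * s) * (1 + lam * S))) =
      1 / (1 + lam * s) - 1 / (1 + lam * S) := by field_simp; ring
    rw [mul_add, e2, e3, e1]; ring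
  have hrhs : (2 * g + 2 * e) / (1 + lam * s) ≤ 2 * g + 2 * e :=
    div_le_self (by linarith) hu.le
  have hrhs0 : 0 ≤ (2 * g + 2 * e) / (1 + lam * s) := by
    apply div_nonneg <;> linarith
  have hcoef : 0 < 1 / (s * S) + lam / ((1 + lam * s) * (1 + lam * S)) := by positivity
  have hsS : s ≤ S := by
    by_contra hc
    push Not at hc
    have : (S - s) * (1 / (s * S) + lam / ((1 + lam * s) * (1 + lam * S))) < 0 :=
      mul_neg_of_neg_of_pos (by linarith) hcoef
    linarith
  have hd : S - s ≤ (2 * g + 2 * e) * S ^ 2 := by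
    have q : (S - s) * (1 / (s * S)) ≤ 2 * g + 2 * e := by
      have : 0 ≤ (S - s) * (lam / ((1 + lam * s) * (1 + lam * S))) :=
        mul_nonneg (by linarith) (by positivity)
      rw [mul_add] at hdiff
      linarith
    rw [mul_one_div, div_le_iff₀ (by positivity)] at q
    have : s * S ≤ S ^ 2 := by nlinarith
    nlinarith [mul_le_mul_of_nonneg_left this (show 0 ≤ 2 * g + 2 * e by linarith)]
  -- bound on tau
  have hrt : 1 / S ≤ ρ / τ ^ 2 := by
    have a1 : 1 / S ≤ 1 / s := one_div_le_one_div_of_le hs hsS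
    have a2 : (1 - 2 * g - 4 * e) / (1 + lam * s) ^ 2 ≤ (1 - 2 * g - 2 * e) / (1 + lam * s) := by
      rw [div_le_div_iff₀ (by positivity) (by positivity)]
      have b1 : (1 - 2 * g - 4 * e) * (1 + lam * s) ≤ (1 - 2 * g - 2 * e) * (1 + lam * s) := by
        apply mul_le_mul_of_nonneg_right <;> linarith
      have b2 : (1 - 2 * g - 2 * e) * (1 + lam * s) ≤ (1 - 2 * g - 2 * e) * (1 + lam * s) ^ 2 := by
        exact mul_le_mul_of_nonneg_left (le_self_pow₀ hu.le two_ne_zero) (by linarith)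
      linarith
    linarith
  have hT : g + e ≤ C * S / P * ρ := by
    have c1 : P / (S * ρ) ≤ x ^ 2 := by
      rw [hx2, div_pow]
      have d1 : 1 / (S * ρ) ≤ 1 / τ ^ 2 := by
        rw [div_le_div_iff₀ (by positivity) (by positivity)] at hrt ⊢
        linarith
      have d2 : 1 / τ ^ 2 ≤ (1 + lam * s) ^ 2 / τ ^ 2 := by
        gcongr
        exact one_le_pow₀ hu.le
      calc P / (S * ρ) = P * (1 / (S * ρ)) := by ring
        _ ≤ _ := mul_le_mul_of_nonneg_left (d1.trans d2) hP.le
    calc g + e ≤ C / x ^ 2 := hTs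
      _ ≤ C / (P / (S * ρ)) := by gcongr
      _ = C * S / P * ρ := by field_simp
  refine ⟨1 - 2 * g - 4 * e, ht, hb, ?_, ?_, h1⟩
  · rw [abs_le]; constructor <;> linarith
  · rw [abs_le]
    have : (2 * g + 2 * e) * S ^ 2 ≤ 2 * (C * S / P) * S ^ 2 * ρ := by
      have := mul_le_mul_of_nonneg_right hT (sq_nonneg S)
      linarith
    constructor <;> linarith

/-- for `λ > 0`, as `ρ → 0⁺`, `τ*(ρ)` and `β*(ρ)` are asymptotically
equivalent to `√ρ/√(δ − 1/(1+λs*)²)` and `2√ρ/(s*√(δ − 1/(1+λs*)²))` respectively, where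
`s* = (√((δ−λ−1)² + 4δλ) − δ + λ + 1)/(2δλ)`. -/
theorem saddle_point_limit_rho_zero_RZF (δ P lam : ℝ)
    (hδ : 0 < δ) (hP : 0 < P) (hlam : 0 < lam)
    (βs τs : ℝ → ℝ)
    (hsad : ∀ ρ : ℝ, 0 < ρ → IsSaddle δ ρ P lam (βs ρ) (τs ρ)) :
    Tendsto (fun ρ => τs ρ / (Real.sqrt ρ / Real.sqrt (δ - 1 / (1 + lam *
        ((Real.sqrt ((δ - lam - 1) ^ 2 + 4 * δ * lam) - δ + lam + 1) / (2 * δ * lam))) ^ 2)))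
      (nhdsWithin 0 (Set.Ioi 0)) (nhds 1) ∧
    Tendsto (fun ρ => βs ρ / (2 * Real.sqrt ρ /
        (((Real.sqrt ((δ - lam - 1) ^ 2 + 4 * δ * lam) - δ + lam + 1) / (2 * δ * lam)) *
          Real.sqrt (δ - 1 / (1 + lam *
            ((Real.sqrt ((δ - lam - 1) ^ 2 + 4 * δ * lam) - δ + lam + 1) / (2 * δ * lam))) ^ 2))))
      (nhdsWithin 0 (Set.Ioi 0)) (nhds 1) := by
  set S := (Real.sqrt ((δ - lam - 1) ^ 2 + 4 * δ * lam) - δ + lam + 1) / (2 * δ * lam) with hSdef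
  have hδl : 0 < δ * lam := mul_pos hδ hlam
  have hrad : 0 ≤ (δ - lam - 1) ^ 2 + 4 * δ * lam := by nlinarith [sq_nonneg (δ - lam - 1)]
  have hsq := Real.sq_sqrt hrad
  have hlt : |δ - lam - 1| < Real.sqrt ((δ - lam - 1) ^ 2 + 4 * δ * lam) := by
    rw [← Real.sqrt_sq_eq_abs]
    apply Real.sqrt_lt_sqrt (sq_nonneg _)
    linarith
  have hlt' := (le_abs_self (δ - lam - 1)).trans_lt hlt
  have hS : 0 < S := by
    apply div_pos <;> linarith
  have hquad : δ * lam * S ^ 2 + (δ - lam - 1) * S - 1 = 0 := by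
    have hR : Real.sqrt ((δ - lam - 1) ^ 2 + 4 * δ * lam) = 2 * δ * lam * S + (δ - lam - 1) := by
      rw [hSdef]; field_simp; ring
    rw [hR] at hsq
    have : 4 * (δ * lam) * (δ * lam * S ^ 2 + (δ - lam - 1) * S - 1) = 0 := by
      linear_combination hsq
    rcases mul_eq_zero.1 this with h | h
    · exfalso; linarith
    · exact h
  clear_value S
  have hU : 1 < 1 + lam * S := by nlinarith [mul_pos hlam hS]
  have hSe : δ - 1 / S = 1 / (1 + lam * S) := by
    field_simp
    linear_combination hquad
  set L := δ - 1 / (1 + lam * S) ^ 2 with hL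
  have hLpos : 0 < L := by
    have h1 : 1 / (1 + lam * S) ^ 2 ≤ 1 / (1 + lam * S) := by
      apply one_div_le_one_div_of_le <;> nlinarith
    have h2 : 0 < 1 / S := by positivity
    linarith
  have hex : ∀ ρ : ℝ, ∃ k : ℝ, 0 < ρ → 0 < τs ρ ∧ 0 < βs ρ ∧
      |k - 1| ≤ 4 * ((∫ h, h ^ 4 ∂_root_.stdGaussian) * S / P) * ρ ∧
      |2 * τs ρ / βs ρ - S| ≤ 2 * ((∫ h, h ^ 4 ∂_root_.stdGaussian) * S / P) * S ^ 2 * ρ ∧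
      ρ / τs ρ ^ 2 = δ - k / (1 + lam * (2 * τs ρ / βs ρ)) ^ 2 := fun ρ => by
    by_cases hρ : 0 < ρ
    · obtain ⟨k, hk⟩ := saddle_core hδ hP hlam hρ hS hSe (hsad ρ hρ)
      exact ⟨k, fun _ => hk⟩
    · exact ⟨0, fun h => absurd h hρ⟩
  choose k hk using hex
  have hev : ∀ᶠ ρ : ℝ in nhdsWithin 0 (Set.Ioi 0), 0 < ρ := self_mem_nhdsWithin
  have hlin : ∀ c : ℝ, Tendsto (fun ρ : ℝ => c * ρ) (nhdsWithin 0 (Set.Ioi 0)) (nhds 0) := by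
    intro c
    have : Tendsto (fun ρ : ℝ => c * ρ) (nhds 0) (nhds (c * 0)) := by
      apply Continuous.tendsto; fun_prop
    rw [mul_zero] at this
    exact this.mono_left nhdsWithin_le_nhds
  have hkl : Tendsto k (nhdsWithin 0 (Set.Ioi 0)) (nhds 1) := by
    rw [tendsto_iff_norm_sub_tendsto_zero]
    refine squeeze_zero' (Eventually.of_forall fun _ => norm_nonneg _) ?_
      (hlin (4 * ((∫ h, h ^ 4 ∂_root_.stdGaussian) * S / P)))
    filter_upwards [hev] with ρ hρ
    exact (hk ρ hρ).2.2.1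
  have hsl : Tendsto (fun ρ => 2 * τs ρ / βs ρ) (nhdsWithin 0 (Set.Ioi 0)) (nhds S) := by
    rw [tendsto_iff_norm_sub_tendsto_zero]
    refine squeeze_zero' (Eventually.of_forall fun _ => norm_nonneg _) ?_
      (hlin (2 * ((∫ h, h ^ 4 ∂_root_.stdGaussian) * S / P) * S ^ 2))
    filter_upwards [hev] with ρ hρ
    exact (hk ρ hρ).2.2.2.1
  have hrl : Tendsto (fun ρ => ρ / τs ρ ^ 2) (nhdsWithin 0 (Set.Ioi 0)) (nhds L) := by
    have h1 : Tendsto (fun ρ => δ - k ρ / (1 + lam * (2 * τs ρ / βs ρ)) ^ 2)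
        (nhdsWithin 0 (Set.Ioi 0)) (nhds L) :=
      tendsto_const_nhds.sub (hkl.div ((tendsto_const_nhds.add
        (tendsto_const_nhds.mul hsl)).pow 2) (by positivity))
    refine h1.congr' ?_
    filter_upwards [hev] with ρ hρ
    exact (hk ρ hρ).2.2.2.2.symm
  have hτ : Tendsto (fun ρ => τs ρ / (Real.sqrt ρ / Real.sqrt L))
      (nhdsWithin 0 (Set.Ioi 0)) (nhds 1) := by
    have h1 : Tendsto (fun ρ => Real.sqrt (L / (ρ / τs ρ ^ 2)))
        (nhdsWithin 0 (Set.Ioi 0)) (nhds (Real.sqrt (L / L))) :=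
      (tendsto_const_nhds.div hrl hLpos.ne').sqrt
    rw [div_self hLpos.ne', Real.sqrt_one] at h1
    refine h1.congr' ?_
    filter_upwards [hev] with ρ hρ
    have ht := (hk ρ hρ).1
    rw [Real.sqrt_div hLpos.le, Real.sqrt_div hρ.le, Real.sqrt_sq ht.le]
    have : 0 < Real.sqrt ρ := Real.sqrt_pos.2 hρ
    field_simp
  refine ⟨hτ, ?_⟩
  have h2 := (tendsto_const_nhds (x := S)).div hsl hS.ne' |>.mul hτ
  rw [div_self hS.ne', mul_one] at h2
  refine h2.congr' ?_
  filter_upwards [hev] with ρ hρ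
  have ht := (hk ρ hρ).1
  have hb := (hk ρ hρ).2.1
  have h3 : 0 < Real.sqrt ρ := Real.sqrt_pos.2 hρ
  have h4 : 0 < Real.sqrt L := Real.sqrt_pos.2 hLpos
  simp only [Pi.div_apply]
  field_simp
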